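/- For every mu in the open interval (0, 0.5), the mixture p_mu := mu*p_PS(V = 1, p_ps = 1/4) + (1-mu)*p_local is minimally network nonclassical in the minimal 3-chain scenario: p_mu does not belong to S0, while p_mu belongs to both S1^[AB^O BC^L] and S1^[AB^L BC^O]. -/

import Mathlib

open Finset

/-- A correlation in the minimal 3-chain scenario: `p a b c x z = p(a,b,c|x,z)`. -/
abbrev Corr : Type := Fin 2 → Fin 2 → Fin 2 → Fin 2 → Fin 2 → ℝ

/-- `p` is a valid correlation: nonnegative and normalized for every input pair. -/
def IsCorrelation (p : Corr) : Prop :=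
  (∀ a b c x z, 0 ≤ p a b c x z) ∧
  (∀ x z, ∑ a : Fin 2, ∑ b : Fin 2, ∑ c : Fin 2, p a b c x z = 1)

/-- Probability weights on the finite set `Fin n`. -/
def IsWeights {n : ℕ} (q : Fin n → ℝ) : Prop :=
  (∀ l, 0 ≤ q l) ∧ ∑ l, q l = 1

/-- A no-signalling box with binary outputs and input sets `X`, `Y`. -/
def IsNSBox {X Y : Type} [Fintype X] [Fintype Y]
    (nb : Fin 2 → Fin 2 → X → Y → ℝ) : Prop :=
  (∀ o1 o2 x y, 0 ≤ nb o1 o2 x y) ∧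
  (∀ x y, ∑ o1 : Fin 2, ∑ o2 : Fin 2, nb o1 o2 x y = 1) ∧
  (∀ o1 x y y', ∑ o2 : Fin 2, nb o1 o2 x y = ∑ o2 : Fin 2, nb o1 o2 x y') ∧
  (∀ o2 x x' y, ∑ o1 : Fin 2, nb o1 o2 x y = ∑ o1 : Fin 2, nb o1 o2 x' y)

/-- `S0`: classical 3-chain correlations. -/
def MemS0 (p : Corr) : Prop :=
  ∃ (n1 n2 : ℕ) (q1 : Fin n1 → ℝ) (q2 : Fin n2 → ℝ)
    (pA : Fin 2 → Fin 2 → Fin n1 → ℝ)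
    (pB : Fin 2 → Fin n1 → Fin n2 → ℝ)
    (pC : Fin 2 → Fin 2 → Fin n2 → ℝ),
    IsWeights q1 ∧ IsWeights q2 ∧
    (∀ a x l1, 0 ≤ pA a x l1) ∧ (∀ x l1, ∑ a : Fin 2, pA a x l1 = 1) ∧
    (∀ b l1 l2, 0 ≤ pB b l1 l2) ∧ (∀ l1 l2, ∑ b : Fin 2, pB b l1 l2 = 1) ∧
    (∀ c z l2, 0 ≤ pC c z l2) ∧ (∀ z l2, ∑ c : Fin 2, pC c z l2 = 1) ∧
    (∀ a b c x z, p a b c x z =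
      ∑ l1, ∑ l2, q1 l1 * q2 l2 * pA a x l1 * pB b l1 l2 * pC c z l2)

/-- `S1^[AB^O BC^L]`: a no-signalling (OPT) source between Alice and Bob,
a classical source between Bob and Charlie. -/
def MemS1ABo (p : Corr) : Prop :=
  ∃ (n : ℕ) (q : Fin n → ℝ)
    (nb : Fin 2 → Fin 2 → Fin 2 → Fin n → ℝ)
    (pC : Fin 2 → Fin 2 → Fin n → ℝ),
    IsWeights q ∧ IsNSBox nb ∧
    (∀ c z l, 0 ≤ pC c z l) ∧ (∀ z l, ∑ c : Fin 2, pC c z l = 1) ∧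
    (∀ a b c x z, p a b c x z = ∑ l, q l * nb a b x l * pC c z l)

/-- `S1^[AB^L BC^O]`: a classical source between Alice and Bob,
a no-signalling (OPT) source between Bob and Charlie. -/
def MemS1BCo (p : Corr) : Prop :=
  ∃ (n : ℕ) (q : Fin n → ℝ)
    (pA : Fin 2 → Fin 2 → Fin n → ℝ)
    (nb : Fin 2 → Fin 2 → Fin n → Fin 2 → ℝ),
    IsWeights q ∧
    (∀ a x l, 0 ≤ pA a x l) ∧ (∀ x l, ∑ a : Fin 2, pA a x l = 1) ∧
    IsNSBox nb ∧
    (∀ a b c x z, p a b c x z = ∑ l, q l * pA a x l * nb b c l z)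

/-- `S2`: the no-signalling constraints of the 3-chain network. -/
def MemS2 (p : Corr) : Prop :=
  (∃ (pA : Fin 2 → Fin 2 → ℝ) (pC : Fin 2 → Fin 2 → ℝ),
    (∀ a x, 0 ≤ pA a x) ∧ (∀ x, ∑ a : Fin 2, pA a x = 1) ∧
    (∀ c z, 0 ≤ pC c z) ∧ (∀ z, ∑ c : Fin 2, pC c z = 1) ∧
    (∀ a c x z, ∑ b : Fin 2, p a b c x z = pA a x * pC c z)) ∧
  (∀ a b x z z', ∑ c : Fin 2, p a b c x z = ∑ c : Fin 2, p a b c x z') ∧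
  (∀ b c x x' z, ∑ a : Fin 2, p a b c x z = ∑ a : Fin 2, p a b c x' z)

/-- Noisy PR-box correlation `p_PR(V)(a,c|x,z) = (1 + V(-1)^{a+c+x·z})/4`. -/
noncomputable def pPR (V : ℝ) (a c x z : Fin 2) : ℝ :=
  (1 + V * (-1 : ℝ) ^ ((a : ℕ) + (c : ℕ) + (x : ℕ) * (z : ℕ))) / 4

/-- Post-selection box `p_PS(V, p_ps)`: outcome `b = 0` carries `p_ps · p_PR(V)`. -/
noncomputable def pPSbox (V pps : ℝ) : Corr := fun a b c x z =>
  if b = 0 then pps * pPR V a c x z else 1/4 - pps * pPR V a c x z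

/-- The local Bell-test correlation `p_local(a,b,c|x,z) = (1/2)·w(a,b|x,c)`. -/
noncomputable def pLocal : Corr := fun a b c x _z =>
  (1/2) * (if x ≠ c then (1/4 : ℝ) else if a = b then 1/2 else 0)

/-- The mixture `p_μ = μ·p_PS(V, 1/4) + (1-μ)·p_local`. -/
noncomputable def pMix (V μ : ℝ) : Corr := fun a b c x z =>
  μ * pPSbox V (1/4) a b c x z + (1 - μ) * pLocal a b c x z

/-!
**Nonclassicality.** In a classical chain we may take the two hidden variables to be the
deterministic strategies `s` and `t` of Alice and Charlie, which are independent. Suppose Bob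
outputs `0`. For `p_μ`, three zeros force `s 0 = 0` unless `t 0 = t 1 = 1`, and forbid
`s 1 = t 1 = 1`. Each of the events `s 0 = t 0 = 1`, `s 1 = t 0 = 0` and `s 1 = t 0 = 1` then pins
down a strategy of Alice, and independence turns their probabilities into a Hardy-type inequality.
For `p_μ` it reads `μ ≤ 0`.

**Single-source models.** If one source is classical, distribute a uniformly random deterministic
strategy over it, and let the other two parties share a box whose first outcome is unbiased. Such a
box is determined by the bias `m` of its second outcome and its correlators `E`, and it is
nonnegative when `|m| + |E| ≤ 1`. Matching `p_μ` is a linear system for `m` and `E`, which for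
`0 ≤ μ ≤ 1 / 2` has a solution within these bounds. Reversing the chain exchanges the two kinds of
model.
-/

lemma sum_filter_prod_apply {ι κ R : Type*} [Fintype ι] [DecidableEq ι] [Fintype κ] [DecidableEq κ]
    [CommSemiring R] {f : ι → κ → R} {i : ι} (hf : ∀ j ≠ i, ∑ k, f j k = 1) (k : κ) :
    ∑ s : ι → κ with s i = k, ∏ j, f j (s j) = f i k := by
  have restrict (s : ι → κ) : (if s i = k then ∏ j, f j (s j) else 0) =
      ∏ j, if j = i → s j = k then f j (s j) else 0 := by
    split_ifs with h
    · exact prod_congr rfl fun j _ => (if_pos fun hj => hj ▸ h).symm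
    · exact (prod_eq_zero (mem_univ i) (if_neg fun hi => h (hi rfl))).symm
  calc ∑ s : ι → κ with s i = k, ∏ j, f j (s j)
      = ∏ j, ∑ l, if j = i → l = k then f j l else 0 := by
        simp only [sum_filter, restrict, Fintype.prod_sum]
    _ = ∑ l, if i = i → l = k then f i l else 0 :=
        Fintype.prod_eq_single i fun j hj => by simp [hj, hf j hj]
    _ = f i k := by simp

/-- A deterministic strategy of Alice or Charlie: the outcome given to each input. -/
abbrev Strategy : Type := Fin 2 → Fin 2

lemma filter_strategy_zero (o : Fin 2) :
    ({s | s 0 = o} : Finset Strategy) = {![o, 0], ![o, 1]} := by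
  decide +revert

lemma filter_strategy_one (o : Fin 2) :
    ({s | s 1 = o} : Finset Strategy) = {![0, o], ![1, o]} := by
  decide +revert

lemma sum_strategy_zero (f : Strategy → ℝ) (o : Fin 2) :
    ∑ s with s 0 = o, f s = f ![o, 0] + f ![o, 1] := by
  rw [filter_strategy_zero, sum_pair (by simp)]

lemma sum_strategy_one (f : Strategy → ℝ) (o : Fin 2) :
    ∑ s with s 1 = o, f s = f ![0, o] + f ![1, o] := by
  rw [filter_strategy_one, sum_pair (by simp)]

section strategyWeight

variable {n : ℕ} {q : Fin n → ℝ} {k : Fin 2 → Fin 2 → Fin n → ℝ}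

/-- The joint weight of the value `l` of a hidden variable distributed according to `q` and of the
strategy `s`, when the outcomes to the two inputs are drawn independently from the responses
`k · x l`. -/
def strategyWeight (q : Fin n → ℝ) (k : Fin 2 → Fin 2 → Fin n → ℝ) (l : Fin n) (s : Strategy) : ℝ :=
  q l * ∏ x, k (s x) x l

lemma strategyWeight_nonneg (hq : IsWeights q) (hk : ∀ o x l, 0 ≤ k o x l) (l : Fin n)
    (s : Strategy) : 0 ≤ strategyWeight q k l s :=
  mul_nonneg (hq.1 l) (prod_nonneg fun _ _ => hk _ _ _)

lemma sum_filter_strategyWeight (hk : ∀ x l, ∑ o, k o x l = 1) (l : Fin n) (o x : Fin 2) :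
    ∑ s with s x = o, strategyWeight q k l s = q l * k o x l := by
  simp only [strategyWeight, ← mul_sum]
  rw [sum_filter_prod_apply (f := fun x o => k o x l) fun x _ => hk x l]

lemma sum_sum_strategyWeight (hq : IsWeights q) (hk : ∀ x l, ∑ o, k o x l = 1) :
    ∑ s, ∑ l, strategyWeight q k l s = 1 := by
  rw [sum_comm, ← hq.2]
  refine sum_congr rfl fun l _ => ?_
  rw [← sum_fiberwise univ (fun s : Strategy => s 0)]
  simp only [sum_filter_strategyWeight hk, ← mul_sum, hk, mul_one]

end strategyWeight

/-- A classical model of the chain correlation `p` whose two independent hidden variables are the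
deterministic strategies of Alice and Charlie, with weights `alice` and `charlie`. Bob's response is
encoded in `joint b s t`, the joint weight of his outcome and the two strategies. -/
structure StrategyModel (p : Corr) where
  alice : Strategy → ℝ
  charlie : Strategy → ℝ
  joint : Fin 2 → Strategy → Strategy → ℝ
  alice_nonneg (s : Strategy) : 0 ≤ alice s
  charlie_nonneg (t : Strategy) : 0 ≤ charlie t
  joint_nonneg (b : Fin 2) (s t : Strategy) : 0 ≤ joint b s t
  sum_alice : ∑ s, alice s = 1
  sum_charlie : ∑ t, charlie t = 1
  sum_joint (s t : Strategy) : ∑ b, joint b s t = alice s * charlie t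
  apply_eq (a b c x z : Fin 2) :
    p a b c x z = ∑ s with s x = a, ∑ t with t z = c, joint b s t

lemma MemS0.nonempty_strategyModel {p : Corr} (h : MemS0 p) : Nonempty (StrategyModel p) := by
  obtain ⟨n1, n2, q1, q2, pA, pB, pC, hq1, hq2, hA, hAs, hB, hBs, hC, hCs, hp⟩ := h
  have wA_nonneg := strategyWeight_nonneg hq1 hA
  have wC_nonneg := strategyWeight_nonneg hq2 hC
  refine ⟨{
    alice s := ∑ l1, strategyWeight q1 pA l1 s
    charlie t := ∑ l2, strategyWeight q2 pC l2 t
    joint b s t := ∑ l1, ∑ l2, strategyWeight q1 pA l1 s * strategyWeight q2 pC l2 t * pB b l1 l2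
    alice_nonneg s := sum_nonneg fun l1 _ => wA_nonneg l1 s
    charlie_nonneg t := sum_nonneg fun l2 _ => wC_nonneg l2 t
    joint_nonneg b s t := sum_nonneg fun l1 _ => sum_nonneg fun l2 _ =>
      mul_nonneg (mul_nonneg (wA_nonneg l1 s) (wC_nonneg l2 t)) (hB b l1 l2)
    sum_alice := sum_sum_strategyWeight hq1 hAs
    sum_charlie := sum_sum_strategyWeight hq2 hCs
    sum_joint s t := ?_
    apply_eq a b c x z := ?_ }⟩
  · rw [sum_comm, sum_mul_sum]
    refine sum_congr rfl fun l1 _ => ?_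
    rw [sum_comm]
    simp only [← mul_sum, hBs, mul_one]
  · rw [hp, sum_comm_cycle]
    refine sum_congr rfl fun l1 _ => ?_
    rw [sum_comm_cycle]
    refine sum_congr rfl fun l2 _ => ?_
    simp only [← sum_mul, ← sum_mul_sum, sum_filter_strategyWeight hAs,
      sum_filter_strategyWeight hCs]
    ring

namespace StrategyModel

variable {p : Corr} (M : StrategyModel p)

include M

lemma joint_le (b : Fin 2) (s t : Strategy) : M.joint b s t ≤ M.alice s * M.charlie t :=
  M.sum_joint s t ▸ single_le_sum (fun b _ => M.joint_nonneg b s t) (mem_univ b)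

lemma joint_eq_zero {b x z : Fin 2} {s t : Strategy} (h : p (s x) b (t z) x z = 0) :
    M.joint b s t = 0 := by
  rw [M.apply_eq, sum_eq_zero_iff_of_nonneg fun _ _ => sum_nonneg fun _ _ => M.joint_nonneg _ _ _]
    at h
  exact (sum_eq_zero_iff_of_nonneg fun _ _ => M.joint_nonneg _ _ _).1 (h s (by simp)) t (by simp)

lemma le_sum_alice_mul_sum_charlie {a b c x z : Fin 2} {S T : Finset Strategy}
    (hST : ∀ s t, s x = a → t z = c → M.joint b s t ≠ 0 → s ∈ S ∧ t ∈ T) :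
    p a b c x z ≤ (∑ s ∈ S, M.alice s) * ∑ t ∈ T, M.charlie t := by
  rw [M.apply_eq, sum_mul_sum, ← sum_product', ← sum_product', ← sum_filter_ne_zero]
  refine (sum_le_sum fun _ _ => M.joint_le _ _ _).trans
    (sum_le_sum_of_subset_of_nonneg (fun st hst => ?_)
      fun st _ _ => mul_nonneg (M.alice_nonneg st.1) (M.charlie_nonneg st.2))
  simp only [mem_filter, mem_product, mem_univ, true_and] at hst
  exact mem_product.2 (hST _ _ hst.1.1 hst.1.2 hst.2)

lemma sum_alice_filter (a x z : Fin 2) :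
    ∑ s with s x = a, M.alice s = ∑ b, ∑ c, p a b c x z :=
  calc ∑ s with s x = a, M.alice s
      = ∑ s with s x = a, ∑ t, ∑ b, M.joint b s t := by
        simp only [M.sum_joint, ← mul_sum, M.sum_charlie, mul_one]
    _ = ∑ b, ∑ s with s x = a, ∑ t, M.joint b s t := sum_comm_cycle
    _ = ∑ b, ∑ s with s x = a, ∑ c, ∑ t with t z = c, M.joint b s t := by
        simp only [sum_fiberwise]
    _ = ∑ b, ∑ c, p a b c x z := by
        simp only [M.apply_eq]
        exact sum_congr rfl fun b _ => sum_comm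

lemma sum_charlie_filter (c x z : Fin 2) :
    ∑ t with t z = c, M.charlie t = ∑ a, ∑ b, p a b c x z :=
  calc ∑ t with t z = c, M.charlie t
      = ∑ t with t z = c, ∑ s, ∑ b, M.joint b s t := by
        simp only [M.sum_joint, ← sum_mul, M.sum_alice, one_mul]
    _ = ∑ s, ∑ b, ∑ t with t z = c, M.joint b s t := by
        rw [sum_comm]
        exact sum_congr rfl fun s _ => sum_comm
    _ = ∑ a, ∑ b, p a b c x z := by
        simp only [M.apply_eq]
        rw [← sum_fiberwise univ (fun s : Strategy => s x)]
        exact sum_congr rfl fun a _ => sum_comm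

lemma hardy_support (h00 : p 1 0 0 0 0 = 0) (h01 : p 1 0 0 0 1 = 0) (h11 : p 1 0 1 1 1 = 0)
    {s t : Strategy} (hst : M.joint 0 s t ≠ 0) :
    (s 0 = 1 → t = ![1, 1]) ∧ (s 1 = 1 → t 1 = 0) := by
  have s0_t0 : ¬(s 0 = 1 ∧ t 0 = 0) := fun ⟨hs, ht⟩ => hst (M.joint_eq_zero (by rwa [hs, ht]))
  have s0_t1 : ¬(s 0 = 1 ∧ t 1 = 0) := fun ⟨hs, ht⟩ => hst (M.joint_eq_zero (by rwa [hs, ht]))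
  have s1_t1 : ¬(s 1 = 1 ∧ t 1 = 1) := fun ⟨hs, ht⟩ => hst (M.joint_eq_zero (by rwa [hs, ht]))
  clear hst
  decide +revert

lemma hardy_bounds (h00 : p 1 0 0 0 0 = 0) (h01 : p 1 0 0 0 1 = 0) (h11 : p 1 0 1 1 1 = 0) :
    p 1 0 1 0 0 ≤ M.alice ![1, 0] * M.charlie ![1, 1] ∧
    p 0 0 0 1 0 ≤ M.alice ![0, 0] * ∑ t with t 0 = 0, M.charlie t ∧
    p 1 0 1 1 0 ≤ M.alice ![0, 1] * M.charlie ![1, 0] := by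
  have bound (a c x z : Fin 2) (S T : Finset Strategy)
      (hST : ∀ s t : Strategy, s x = a → t z = c →
        (s 0 = 1 → t = ![1, 1]) ∧ (s 1 = 1 → t 1 = 0) → s ∈ S ∧ t ∈ T) :
      p a 0 c x z ≤ (∑ s ∈ S, M.alice s) * ∑ t ∈ T, M.charlie t :=
    M.le_sum_alice_mul_sum_charlie fun s t hs ht hst =>
      hST s t hs ht (M.hardy_support h00 h01 h11 hst)
  have e1 := bound 1 1 0 0 {![1, 0]} {![1, 1]} (by decide)
  have e2 := bound 0 0 1 0 {![0, 0]} {t | t 0 = 0} (by decide)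
  have e3 := bound 1 1 1 0 {![0, 1]} {![1, 0]} (by decide)
  simp only [sum_singleton] at e1 e2 e3
  exact ⟨e1, e2, e3⟩

lemma hardy_inequality (h00 : p 1 0 0 0 0 = 0) (h01 : p 1 0 0 0 1 = 0) (h11 : p 1 0 1 1 1 = 0)
    {u w : ℝ} (hu : ∑ b, ∑ c, p 0 b c 1 0 = u) (hw : ∑ a, ∑ b, p a b 0 0 0 = w) :
    p 1 0 1 1 0 * (u * w - p 0 0 0 1 0) ≤
      (1 - u) * ((1 - w) * (u * w - p 0 0 0 1 0) - w * p 1 0 1 0 0) := by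
  obtain ⟨h_e1, h_e2, h_e3⟩ := M.hardy_bounds h00 h01 h11
  rw [← M.sum_alice_filter, sum_strategy_one] at hu
  rw [← M.sum_charlie_filter] at hw
  rw [hw] at h_e2
  have alice_total := M.sum_alice
  rw [← sum_fiberwise univ (fun s : Strategy => s 1), Fin.sum_univ_two, sum_strategy_one,
    sum_strategy_one] at alice_total
  have charlie_total := M.sum_charlie
  rw [← sum_fiberwise univ (fun t : Strategy => t 0), Fin.sum_univ_two, hw,
    sum_strategy_zero] at charlie_total
  have hw_nonneg : 0 ≤ w := hw ▸ sum_nonneg fun t _ => M.charlie_nonneg t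
  set D := u * w - p 0 0 0 1 0
  have hD : M.alice ![1, 0] * w ≤ D := by
    simp only [D, ← hu]
    linarith
  have hD_nonneg : 0 ≤ D := (mul_nonneg (M.alice_nonneg _) hw_nonneg).trans hD
  have hu_nonneg : 0 ≤ 1 - u := by
    linarith [M.alice_nonneg ![0, 1], M.alice_nonneg ![1, 1]]
  calc p 1 0 1 1 0 * D
      ≤ M.alice ![0, 1] * M.charlie ![1, 0] * D := by gcongr
    _ ≤ (1 - u) * M.charlie ![1, 0] * D := by
        gcongr
        · exact M.charlie_nonneg _
        · linarith [M.alice_nonneg ![1, 1]]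
    _ = (1 - u) * ((1 - w) * D - M.charlie ![1, 1] * D) := by
        linear_combination (1 - u) * D * charlie_total
    _ ≤ (1 - u) * ((1 - w) * D - M.charlie ![1, 1] * (M.alice ![1, 0] * w)) := by
        gcongr
        exact M.charlie_nonneg _
    _ = (1 - u) * ((1 - w) * D - w * (M.alice ![1, 0] * M.charlie ![1, 1])) := by ring
    _ ≤ (1 - u) * ((1 - w) * D - w * p 1 0 1 0 0) := by gcongr

end StrategyModel

lemma not_memS0_pMix_one {μ : ℝ} (hμ : 0 < μ) : ¬ MemS0 (pMix 1 μ) := by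
  intro h
  obtain ⟨M⟩ := h.nonempty_strategyModel
  have zero100_00 : pMix 1 μ 1 0 0 0 0 = 0 := by simp [pMix, pPSbox, pPR, pLocal]
  have zero100_01 : pMix 1 μ 1 0 0 0 1 = 0 := by simp [pMix, pPSbox, pPR, pLocal]
  have zero101_11 : pMix 1 μ 1 0 1 1 1 = 0 := by norm_num [pMix, pPSbox, pPR, pLocal]
  have value101_00 : pMix 1 μ 1 0 1 0 0 = 1 / 8 := by norm_num [pMix, pPSbox, pPR, pLocal]; ring
  have value000_10 : pMix 1 μ 0 0 0 1 0 = 1 / 8 := by norm_num [pMix, pPSbox, pPR, pLocal]; ring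
  have value101_10 : pMix 1 μ 1 0 1 1 0 = μ / 8 := by norm_num [pMix, pPSbox, pPR, pLocal]; ring
  have marginalA : ∑ b, ∑ c, pMix 1 μ 0 b c 1 0 = 1 / 2 := by
    norm_num [Fin.sum_univ_two, pMix, pPSbox, pPR, pLocal]; ring
  have marginalC : ∑ a, ∑ b, pMix 1 μ a b 0 0 0 = 1 / 2 := by
    norm_num [Fin.sum_univ_two, pMix, pPSbox, pPR, pLocal]; ring
  have hardy := M.hardy_inequality zero100_00 zero100_01 zero101_11 marginalA marginalC
  rw [value101_00, value000_10, value101_10] at hardy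
  linarith

/-- The sign `(-1) ^ o` of a binary outcome. -/
def outcomeSign (o : Fin 2) : ℝ := (-1) ^ (o : ℕ)

lemma pMix_eq (V μ : ℝ) (a b c x z : Fin 2) :
    pMix V μ a b c x z = (2 - μ * outcomeSign b + (1 - μ) * (outcomeSign a * outcomeSign b) +
      (μ * V * (-1) ^ (x * z : ℕ) + (1 - μ) * outcomeSign x) *
        (outcomeSign a * outcomeSign b * outcomeSign c)) / 16 := by
  have pPSbox_eq : pPSbox V (1 / 4) a b c x z = (2 - outcomeSign b + V * (-1) ^ (x * z : ℕ) *
      (outcomeSign a * outcomeSign b * outcomeSign c)) / 16 := by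
    fin_cases b <;> simp [pPSbox, pPR, pow_add, outcomeSign] <;> ring
  have pLocal_eq : pLocal a b c x z = (2 + outcomeSign a * outcomeSign b *
      (1 + outcomeSign x * outcomeSign c)) / 16 := by
    fin_cases a <;> fin_cases b <;> fin_cases c <;> fin_cases x <;>
      norm_num [pLocal, outcomeSign]
  rw [pMix, pPSbox_eq, pLocal_eq]
  ring

/-- The distribution of two binary outcomes with correlator `E`, the first of which is unbiased and
the second of which has expectation `m`. -/
noncomputable def biasedBox (m E : ℝ) (o1 o2 : Fin 2) : ℝ :=
  (1 + m * outcomeSign o2 + E * (outcomeSign o1 * outcomeSign o2)) / 4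

lemma biasedBox_nonneg {m E : ℝ} (h : |m| + |E| ≤ 1) (o1 o2 : Fin 2) : 0 ≤ biasedBox m E o1 o2 := by
  fin_cases o1 <;> fin_cases o2 <;> simp [biasedBox, outcomeSign] <;>
    linarith [neg_abs_le m, le_abs_self m, neg_abs_le E, le_abs_self E]

lemma sum_biasedBox_right (m E : ℝ) (o1 : Fin 2) : ∑ o2, biasedBox m E o1 o2 = 1 / 2 := by
  simp [biasedBox, outcomeSign]
  ring

lemma sum_biasedBox_left (m E : ℝ) (o2 : Fin 2) :
    ∑ o1, biasedBox m E o1 o2 = (1 + m * outcomeSign o2) / 2 := by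
  simp [biasedBox, outcomeSign]
  ring

lemma isNSBox_biasedBox {X Y : Type} [Fintype X] [Fintype Y] {m : Y → ℝ} {E : X → Y → ℝ}
    (h : ∀ x y, |m y| + |E x y| ≤ 1) :
    IsNSBox (fun o1 o2 x y => biasedBox (m y) (E x y) o1 o2) :=
  ⟨fun o1 o2 x y => biasedBox_nonneg (h x y) o1 o2,
    fun x y => by simp only [sum_biasedBox_right]; norm_num,
    fun o1 x y y' => by simp only [sum_biasedBox_right],
    fun o2 x x' y => by simp only [sum_biasedBox_left]⟩

lemma IsNSBox.swap {X Y : Type} [Fintype X] [Fintype Y] {nb : Fin 2 → Fin 2 → X → Y → ℝ}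
    (h : IsNSBox nb) : IsNSBox (fun o1 o2 y x => nb o2 o1 x y) := by
  obtain ⟨nonneg, sum_eq_one, sum_right, sum_left⟩ := h
  exact ⟨fun o1 o2 y x => nonneg o2 o1 x y, fun y x => sum_comm.trans (sum_eq_one x y),
    fun o1 y x x' => sum_left o1 x x' y, fun o2 y y' x => sum_right o2 x y y'⟩

/-- The correlation `p` read along the chain in the opposite direction. -/
def chainReverse (p : Corr) : Corr := fun a b c x z => p c b a z x

lemma MemS1BCo.of_chainReverse {p : Corr} (h : MemS1ABo (chainReverse p)) : MemS1BCo p := by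
  obtain ⟨n, q, nb, pC, hq, hnb, hC, hCs, hp⟩ := h
  refine ⟨n, q, pC, fun b c l z => nb c b z l, hq, hC, hCs, hnb.swap, fun a b c x z => ?_⟩
  exact (hp c b a z x).trans (sum_congr rfl fun l _ => by ring)

lemma memS1ABo_of_strategy {p : Corr} {q : Strategy → ℝ} {nb : Fin 2 → Fin 2 → Fin 2 → Strategy → ℝ}
    (hq : ∀ t, 0 ≤ q t) (hqs : ∑ t, q t = 1) (hnb : IsNSBox nb)
    (hp : ∀ a b c x z, p a b c x z = ∑ t with t z = c, q t * nb a b x t) : MemS1ABo p := by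
  let e : Fin (Fintype.card Strategy) ≃ Strategy := (Fintype.equivFin Strategy).symm
  obtain ⟨nonneg, sum_eq_one, sum_right, sum_left⟩ := hnb
  refine ⟨_, fun l => q (e l), fun a b x l => nb a b x (e l),
    fun c z l => if e l z = c then 1 else 0, ⟨fun l => hq _, (e.sum_comp q).trans hqs⟩,
    ⟨fun a b x l => nonneg a b x _, fun x l => sum_eq_one x _, fun a x l l' => sum_right a x _ _,
      fun b x x' l => sum_left b x x' _⟩,
    fun c z l => by positivity, fun z l => by simp, fun a b c x z => ?_⟩
  rw [hp, sum_filter, ← e.sum_comp]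
  exact sum_congr rfl fun l _ => by rw [mul_ite, mul_one, mul_zero]

lemma memS1ABo_of_biasedBox {p : Corr} {m : Strategy → ℝ} {E : Fin 2 → Strategy → ℝ}
    (h : ∀ x t, |m t| + |E x t| ≤ 1)
    (hp : ∀ a b c x z, p a b c x z = ∑ t with t z = c, 1 / 4 * biasedBox (m t) (E x t) a b) :
    MemS1ABo p :=
  memS1ABo_of_strategy (fun _ => by norm_num) (by norm_num) (isNSBox_biasedBox h) hp

/- Matching `pMix` fixes the means of `m` and `E x` over the strategies `t` and their correlations
with the sign of each `t z`. Their correlations with the product of the two signs are free, and are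
chosen here and in `memS1BCo_pMix_one` to achieve `|m| + |E| ≤ 1`. -/
lemma memS1ABo_pMix_one {μ : ℝ} (h0 : 0 ≤ μ) (h1 : μ ≤ 1 / 2) : MemS1ABo (pMix 1 μ) := by
  refine memS1ABo_of_biasedBox (m := fun t => !![0, -μ; -μ, 0] (t 0) (t 1))
    (E := fun x t => (![!![1, 1 - μ; 1 - μ, -1], !![2 * μ - 1, 1 - μ; 1 - 3 * μ, 1]] x) (t 0) (t 1))
    (fun x t => ?_) fun a b c x z => ?_
  · generalize t 0 = i
    generalize t 1 = j
    rw [← le_sub_iff_add_le', abs_le]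
    constructor <;> fin_cases x <;> fin_cases i <;> fin_cases j <;> simp [abs_of_nonneg h0] <;>
      linarith
  · rw [pMix_eq]
    fin_cases x <;> fin_cases z <;> fin_cases c <;>
      simp [sum_strategy_zero, sum_strategy_one, biasedBox, outcomeSign] <;> ring

lemma memS1BCo_pMix_one {μ : ℝ} (h0 : 0 ≤ μ) (h1 : μ ≤ 1 / 2) : MemS1BCo (pMix 1 μ) := by
  refine .of_chainReverse <| memS1ABo_of_biasedBox
    (m := fun s => !![1 - 2 * μ, 0; 0, -1] (s 0) (s 1))
    (E := fun z s => (![!![2 * μ, 1 - 2 * μ; -1, 0], !![0, 1; -1, 0]] z) (s 0) (s 1))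
    (fun z s => ?_) fun c b a z x => ?_
  · generalize s 0 = i
    generalize s 1 = j
    have h2 : 0 ≤ 1 - 2 * μ := by linarith
    rw [← le_sub_iff_add_le', abs_le]
    constructor <;> fin_cases z <;> fin_cases i <;> fin_cases j <;> simp [abs_of_nonneg h2] <;>
      linarith
  · rw [chainReverse, pMix_eq]
    fin_cases x <;> fin_cases z <;> fin_cases a <;>
      simp [sum_strategy_zero, sum_strategy_one, biasedBox, outcomeSign] <;> ring

/-- for `μ ∈ (0, 0.5)`, the mixture
`p_μ = μ·p_PS(1, 1/4) + (1-μ)·p_local` is minimally network nonclassical. -/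
theorem mix_postquantum_MNN (μ : ℝ) (h1 : (0 : ℝ) < μ) (h2 : μ < (0.5 : ℝ)) :
    ¬ MemS0 (pMix 1 μ) ∧ MemS1ABo (pMix 1 μ) ∧ MemS1BCo (pMix 1 μ) := by
  have h2' : μ ≤ 1 / 2 := by linarith
  exact ⟨not_memS0_pMix_one h1, memS1ABo_pMix_one h1.le h2', memS1BCo_pMix_one h1.le h2'⟩
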